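/- arXiv:2102.13193 — 3 statements merged into one kernel-verified Lean document; each statement's English description precedes it below -/
import Mathlib

section
/- Let n > 4, let G = K_n with vertices v₁, …, v_n, and let H = K_n - {e_{2,4}, …, e_{2,n}} be K_n with the n - 3 edges joining v₂ to v₄, …, v_n removed (so v₂ has degree 2 in H, adjacent only to v₁ and v₃). Let T₁ be the star spanning tree centered at v₁ and let T₂ = (T₁ - {(v₁,v₂)}) ∪ {(v₂,v₃)}. Then T₁ and T₂ are spanning trees of both G and H, ∩_G(T₁) < ∩_G(T₂), and ∩_H(T₁) = ∩_H(T₂). -/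
open SimpleGraph

/-- The set of edges lying on some path (in a tree: the unique path) between `x` and `y`
in the graph `T`. -/
def pathEdges {V : Type*} (T : SimpleGraph V) (x y : V) : Set (Sym2 V) :=
  {f | ∃ p : T.Walk x y, p.IsPath ∧ f ∈ p.edges}

/-- The edge set of the tree-cycle induced (in the spanning tree `T`) by the cycle-edge `e`:
the edge `e` itself together with the edges of the (unique) path in `T` between
the endpoints of `e`. -/
def cycEdges {V : Type*} (T : SimpleGraph V) (e : Sym2 V) : Set (Sym2 V) :=
  insert e {f | ∃ x y, e = s(x, y) ∧ f ∈ pathEdges T x y}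

/-- The vertex set of the tree-cycle induced (in the spanning tree `T`) by the
cycle-edge `e`. -/
def cycVerts {V : Type*} (T : SimpleGraph V) (e : Sym2 V) : Set V :=
  {v | ∃ x y, e = s(x, y) ∧ ∃ p : T.Walk x y, p.IsPath ∧ v ∈ p.support}

/-- Two tree-cycles (induced by the cycle-edges `e` and `f`) have non-empty intersection:
some edge of `T` belongs to both of them. -/
def cyclesIntersect {V : Type*} (T : SimpleGraph V) (e f : Sym2 V) : Prop :=
  (cycEdges T e ∩ cycEdges T f ∩ T.edgeSet).Nonempty

/-- The cycle intersection number `∩_T(c)` of the tree-cycle `c` induced by the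
cycle-edge `e`: the number of tree-cycles distinct from `c` whose intersection with `c`
is non-empty. -/
noncomputable def cycleInterNum {V : Type*} (G T : SimpleGraph V) (e : Sym2 V) : ℕ :=
  {f | f ∈ G.edgeSet \ T.edgeSet ∧ f ≠ e ∧ cyclesIntersect T e f}.ncard

/-- The tree intersection number `∩_G(T)`: the number of unordered pairs of distinct
tree-cycles of `T` whose intersection is non-empty. -/
noncomputable def treeInterNum {V : Type*} (G T : SimpleGraph V) : ℕ :=
  {p : Sym2 (Sym2 V) | ∃ e f : Sym2 V, p = s(e, f) ∧ e ≠ f ∧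
    e ∈ G.edgeSet \ T.edgeSet ∧ f ∈ G.edgeSet \ T.edgeSet ∧ cyclesIntersect T e f}.ncard

/-- `T` is a star spanning tree of `G` with center `v`. -/
def IsStarSpanningTree {V : Type*} (G T : SimpleGraph V) (v : V) : Prop :=
  T ≤ G ∧ T.IsTree ∧ ∀ u, u ≠ v → T.Adj v u

/-- `closest-point-set(w, c)`: the set of vertices outside the tree-cycle `c` (induced by
the cycle-edge `e`) whose closest point on `c` (with respect to distance in `T`) is `w`. -/
def closestPointSet {V : Type*} (T : SimpleGraph V) (e : Sym2 V) (w : V) : Set V :=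
  {v | v ∉ cycVerts T e ∧ ∀ u ∈ cycVerts T e, T.dist v w ≤ T.dist v u}

theorem aux_cyc {V : Type*} {T : SimpleGraph V} (hT : T.IsAcyclic) {a b : V}
    (p : T.Walk a b) (hp : p.IsPath) (hab : s(a, b) ∉ T.edgeSet) (g : Sym2 V) :
    (g ∈ cycEdges T s(a, b) ∧ g ∈ T.edgeSet) ↔ g ∈ p.edges := by
  constructor
  · rintro ⟨h, hg⟩
    rcases h with h | ⟨x, y, hxy, q, hq, hgq⟩
    · subst h; exact absurd hg hab
    · rcases Sym2.eq_iff.1 hxy with ⟨rfl, rfl⟩ | ⟨rfl, rfl⟩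
      · have := (hT.subsingleton_path _ _).elim ⟨p, hp⟩ ⟨q, hq⟩
        simp only [Subtype.mk.injEq] at this
        rwa [this]
      · have := (hT.subsingleton_path _ _).elim ⟨p, hp⟩ ⟨q.reverse, hq.reverse⟩
        simp only [Subtype.mk.injEq] at this
        rw [this]; simpa using hgq
  · intro h
    exact ⟨Or.inr ⟨a, b, rfl, p, hp, h⟩, p.edges_subset_edgeSet h⟩

theorem aux_tree {V : Type*} [Fintype V] {T : SimpleGraph V} (hc : T.Connected) (r : V)
    (par : V → V) (h : ∀ a b, T.Adj a b → (a ≠ r ∧ b = par a) ∨ (b ≠ r ∧ a = par b)) :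
    T.IsTree := by
  classical
  rw [isTree_iff_connected_and_card]
  refine ⟨hc, le_antisymm ?_ hc.card_vert_le_card_edgeSet_add_one⟩
  have hsub : T.edgeSet ⊆ (fun u => s(u, par u)) '' {u | u ≠ r} := by
    intro e
    induction e with
    | _ a b =>
      intro he
      rcases h a b he with ⟨h1, h2⟩ | ⟨h1, h2⟩
      · exact ⟨a, h1, by simp [h2]⟩
      · exact ⟨b, h1, by simp [h2, Sym2.eq_swap]⟩
  have h1 : T.edgeSet.ncard ≤ {u : V | u ≠ r}.ncard :=
    (Set.ncard_le_ncard hsub (Set.toFinite _)).trans (Set.ncard_image_le (Set.toFinite _))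
  have h2 : {u : V | u ≠ r}.ncard + 1 = Nat.card V := by
    have := Set.ncard_add_ncard_compl ({r} : Set V)
    rw [Set.ncard_singleton] at this
    rw [← this, add_comm]; rfl
  rw [← h2]
  exact Nat.add_le_add_right h1 1

/-- Tree edges on a fundamental cycle. -/
theorem aux_inter {V : Type*} {T : SimpleGraph V} (e f : Sym2 V) :
    cyclesIntersect T e f ↔ ∃ g, (g ∈ cycEdges T e ∧ g ∈ T.edgeSet) ∧
      (g ∈ cycEdges T f ∧ g ∈ T.edgeSet) := by
  unfold cyclesIntersect Set.Nonempty
  simp only [Set.mem_inter_iff]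
  exact exists_congr fun g => by tauto

theorem aux_image {V : Type*} (G T₁ T₂ : SimpleGraph V) (φ : Sym2 V ≃ Sym2 V)
    (hE : ∀ e, φ e ∈ G.edgeSet \ T₂.edgeSet ↔ e ∈ G.edgeSet \ T₁.edgeSet)
    (R : Sym2 V → Sym2 V → Prop)
    (hR : ∀ e f, e ∈ G.edgeSet \ T₁.edgeSet → f ∈ G.edgeSet \ T₁.edgeSet →
      (cyclesIntersect T₂ (φ e) (φ f) ↔ R e f)) :
    treeInterNum G T₂ = {p : Sym2 (Sym2 V) | ∃ e f : Sym2 V, p = s(e, f) ∧ e ≠ f ∧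
      e ∈ G.edgeSet \ T₁.edgeSet ∧ f ∈ G.edgeSet \ T₁.edgeSet ∧ R e f}.ncard := by
  unfold treeInterNum
  conv_rhs => rw [← Set.ncard_image_of_injective _ (Sym2.map.injective φ.injective)]
  congr 1
  ext p
  constructor
  · rintro ⟨e, f, rfl, hne, he, hf, hi⟩
    obtain ⟨e, rfl⟩ := φ.surjective e
    obtain ⟨f, rfl⟩ := φ.surjective f
    rw [hE] at he hf
    exact ⟨s(e, f), ⟨e, f, rfl, fun h => hne (by rw [h]), he, hf, (hR e f he hf).1 hi⟩, rfl⟩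
  · rintro ⟨_, ⟨e, f, rfl, hne, he, hf, hi⟩, rfl⟩
    exact ⟨φ e, φ f, rfl, fun h => hne (φ.injective h), (hE e).2 he, (hE f).2 hf,
      (hR e f he hf).2 hi⟩

theorem aux_ex {V : Type*} (P : V → Prop) (v a b : V) :
    (∃ u, P u ∧ s(a, b) = s(v, u)) ↔ (a = v ∧ P b) ∨ (b = v ∧ P a) := by
  constructor
  · rintro ⟨u, hu, h⟩
    rcases Sym2.eq_iff.1 h with ⟨rfl, rfl⟩ | ⟨rfl, rfl⟩
    · exact .inl ⟨rfl, hu⟩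
    · exact .inr ⟨rfl, hu⟩
  · rintro (⟨rfl, h⟩ | ⟨rfl, h⟩)
    · exact ⟨_, h, rfl⟩
    · exact ⟨_, h, Sym2.eq_swap⟩

/-- Let `n > 4`, `G = K_n`, and `H` be `K_n` with the `n - 3` edges
joining `v₂` to all vertices other than `v₁, v₂, v₃` removed (so `v₂` has degree 2 in
`H`, adjacent only to `v₁` and `v₃`). Let `T₁` be the star spanning tree centered at
`v₁` and `T₂ = (T₁ - {(v₁,v₂)}) ∪ {(v₂,v₃)}`. Then `T₁` and `T₂` are spanning trees of
both `G` and `H`, `∩_G(T₁) < ∩_G(T₂)`, and `∩_H(T₁) = ∩_H(T₂)`. -/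
theorem stmt_16 {V : Type*} [Fintype V] (n : ℕ) (hn : Fintype.card V = n) (h4 : 4 < n)
    (v1 v2 v3 : V) (h12 : v1 ≠ v2) (h13 : v1 ≠ v3) (h23 : v2 ≠ v3)
    (H : SimpleGraph V)
    (hH : H = (⊤ : SimpleGraph V).deleteEdges
      {f | ∃ u, u ∉ ({v1, v2, v3} : Set V) ∧ f = s(v2, u)})
    (T₁ T₂ : SimpleGraph V)
    (hT₁ : T₁ = SimpleGraph.fromEdgeSet {f | ∃ u, u ≠ v1 ∧ f = s(v1, u)})
    (hT₂ : T₂ = SimpleGraph.fromEdgeSet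
      ({f | ∃ u, u ≠ v1 ∧ u ≠ v2 ∧ f = s(v1, u)} ∪ {s(v2, v3)})) :
    T₁ ≤ (⊤ : SimpleGraph V) ∧ T₂ ≤ (⊤ : SimpleGraph V) ∧ T₁ ≤ H ∧ T₂ ≤ H ∧
    T₁.IsTree ∧ T₂.IsTree ∧
    treeInterNum (⊤ : SimpleGraph V) T₁ < treeInterNum (⊤ : SimpleGraph V) T₂ ∧
    treeInterNum H T₁ = treeInterNum H T₂ := by
  classical
  have a1 : ∀ a b, T₁.Adj a b ↔ a ≠ b ∧ (a = v1 ∨ b = v1) := by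
    intro a b
    subst hT₁
    simp only [fromEdgeSet_adj, Set.mem_ofPred_eq]
    rw [aux_ex (fun u => u ≠ v1)]
    clear hT₂ hH
    grind
  have a2 : ∀ a b, T₂.Adj a b ↔ (a = v1 ∧ b ≠ v1 ∧ b ≠ v2) ∨ (b = v1 ∧ a ≠ v1 ∧ a ≠ v2) ∨
      (a = v2 ∧ b = v3) ∨ (a = v3 ∧ b = v2) := by
    intro a b
    subst hT₂
    simp only [fromEdgeSet_adj, Set.mem_union, Set.mem_singleton_iff, Set.mem_ofPred_eq]
    have := aux_ex (fun u => u ≠ v1 ∧ u ≠ v2) v1 a b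
    simp only [and_assoc] at this
    rw [this, Sym2.eq_iff]
    clear hT₁ hH this
    grind
  have aH : ∀ a b, H.Adj a b ↔ a ≠ b ∧ (a = v2 → b = v1 ∨ b = v3) ∧
      (b = v2 → a = v1 ∨ a = v3) := by
    intro a b
    subst hH
    simp only [deleteEdges_adj, top_adj, Set.mem_ofPred_eq, Set.mem_insert_iff,
      Set.mem_singleton_iff]
    rw [aux_ex (fun u => ¬ (u = v1 ∨ u = v2 ∨ u = v3))]
    clear hT₁ hT₂
    grind
  clear hT₁ hT₂ hH
  have hne : Nonempty V := ⟨v1⟩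
  have t1 : T₁.IsTree := by
    refine aux_tree ?_ v1 (fun _ => v1) ?_
    · refine connected_iff_exists_forall_reachable _ |>.2 ⟨v1, fun w => ?_⟩
      by_cases hw : w = v1
      · subst hw; rfl
      · exact ((a1 v1 w).2 (by grind)).reachable
    · intro a b; rw [a1]; grind
  have t2 : T₂.IsTree := by
    refine aux_tree ?_ v1 (fun u => if u = v2 then v3 else v1) ?_
    · refine connected_iff_exists_forall_reachable _ |>.2 ⟨v1, fun w => ?_⟩
      by_cases hw : w = v1
      · subst hw; rfl
      by_cases hw2 : w = v2
      · exact ((a2 v1 v3).2 (by grind)).reachable.trans ((a2 v3 w).2 (by grind)).reachable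
      · exact ((a2 v1 w).2 (by grind)).reachable
    · intro a b; rw [a2]; grind
  -- cycles of T₁
  have c1 : ∀ e : Sym2 V, ¬ e.IsDiag → e ∉ T₁.edgeSet → ∀ g,
      (g ∈ cycEdges T₁ e ∧ g ∈ T₁.edgeSet) ↔ ∃ u ∈ e, g = s(v1, u) := by
    intro e
    induction e with
    | _ a b =>
      intro hd he g
      have he' := he
      rw [mem_edgeSet, a1] at he'
      rw [Sym2.mk_isDiag_iff] at hd
      have x1 : T₁.Adj a v1 := (a1 _ _).2 (by grind)
      have x2 : T₁.Adj v1 b := (a1 _ _).2 (by grind)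
      rw [aux_cyc t1.IsAcyclic (.cons x1 (.cons x2 .nil)) (by simp; grind) he]
      simp [Sym2.eq_swap (a := a) (b := v1)]
  have c2 : ∀ e : Sym2 V, ¬ e.IsDiag → e ∉ T₁.edgeSet → ∀ g,
      (g ∈ cycEdges T₂ (Equiv.swap s(v2, v3) s(v1, v2) e) ∧ g ∈ T₂.edgeSet) ↔
      ∃ u, (u ∈ e ∨ (u = v3 ∧ v2 ∈ e)) ∧ g = s(u, if u = v2 then v3 else v1) := by
    have y23 : T₂.Adj v2 v3 := (a2 _ _).2 (by grind)
    have y31 : T₂.Adj v3 v1 := (a2 _ _).2 (by grind)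
    have key : ∀ b, b ≠ v1 → b ≠ v2 → ∀ g,
      (g ∈ cycEdges T₂ (Equiv.swap s(v2, v3) s(v1, v2) s(v2, b)) ∧ g ∈ T₂.edgeSet) ↔
      ∃ u, (u ∈ s(v2, b) ∨ (u = v3 ∧ v2 ∈ s(v2, b))) ∧
        g = s(u, if u = v2 then v3 else v1) := by
      intro b hb1 hb2 g
      by_cases hb3 : b = v3
      · subst hb3
        rw [Equiv.swap_apply_left, Sym2.eq_swap (a := v1) (b := v2),
          aux_cyc t2.IsAcyclic (.cons y23 (.cons y31 .nil)) (by simp; grind)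
            (by rw [mem_edgeSet, a2]; grind)]
        simp
        grind
      · have x2 : T₂.Adj v1 b := (a2 _ _).2 (by grind)
        rw [Equiv.swap_apply_of_ne_of_ne (by simp; grind) (by simp; grind),
          aux_cyc t2.IsAcyclic (.cons y23 (.cons y31 (.cons x2 .nil))) (by simp; grind)
            (by rw [mem_edgeSet, a2]; grind)]
        have := Sym2.eq_swap (a := v1) (b := b)
        simp
        grind
    intro e
    induction e with
    | _ a b =>
      intro hd he g
      have he' := he
      rw [mem_edgeSet, a1] at he'
      rw [Sym2.mk_isDiag_iff] at hd
      by_cases ha2 : a = v2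
      · subst ha2; exact key b (by grind) (by grind) g
      by_cases hb2 : b = v2
      · subst hb2; rw [Sym2.eq_swap (a := a)]; exact key a (by grind) (by grind) g
      have x1 : T₂.Adj a v1 := (a2 _ _).2 (by grind)
      have x2 : T₂.Adj v1 b := (a2 _ _).2 (by grind)
      rw [Equiv.swap_apply_of_ne_of_ne (by simp; grind) (by simp; grind),
          aux_cyc t2.IsAcyclic (.cons x1 (.cons x2 .nil)) (by simp; grind)
            (by rw [mem_edgeSet, a2]; grind)]
      have := Sym2.eq_swap (a := v1) (b := b)
      simp
      grind
  have n1 : ∀ e : Sym2 V, ¬ e.IsDiag → e ∉ T₁.edgeSet → v1 ∉ e := by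
    intro e
    induction e with
    | _ a b =>
      intro hd he
      rw [mem_edgeSet, a1] at he
      rw [Sym2.mk_isDiag_iff] at hd
      simp; grind
  have i1 : ∀ e f : Sym2 V, ¬ e.IsDiag → e ∉ T₁.edgeSet → ¬ f.IsDiag → f ∉ T₁.edgeSet →
      (cyclesIntersect T₁ e f ↔ ∃ u, u ∈ e ∧ u ∈ f) := by
    intro e f he he' hf hf'
    rw [aux_inter]
    simp only [c1 e he he', c1 f hf hf']
    constructor
    · rintro ⟨g, ⟨u, hu, rfl⟩, ⟨w, hw, h⟩⟩
      rw [Sym2.congr_right] at h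
      exact ⟨u, hu, h ▸ hw⟩
    · rintro ⟨u, hu, hw⟩
      exact ⟨_, ⟨u, hu, rfl⟩, ⟨u, hw, rfl⟩⟩
  have i2 : ∀ e f : Sym2 V, ¬ e.IsDiag → e ∉ T₁.edgeSet → ¬ f.IsDiag → f ∉ T₁.edgeSet →
      (cyclesIntersect T₂ (Equiv.swap s(v2, v3) s(v1, v2) e)
        (Equiv.swap s(v2, v3) s(v1, v2) f) ↔
        ∃ u, (u ∈ e ∨ (u = v3 ∧ v2 ∈ e)) ∧ (u ∈ f ∨ (u = v3 ∧ v2 ∈ f))) := by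
    intro e f he he' hf hf'
    rw [aux_inter]
    simp only [c2 e he he', c2 f hf hf']
    have q1 := n1 e he he'
    have q2 := n1 f hf hf'
    constructor
    · rintro ⟨g, ⟨u, hu, rfl⟩, ⟨w, hw, h⟩⟩
      have hu1 : u ≠ v1 := by grind
      have hw1 : w ≠ v1 := by grind
      have : u = w := by
        rw [Sym2.eq_iff] at h
        grind
      exact ⟨u, hu, this ▸ hw⟩
    · rintro ⟨u, hu, hw⟩
      exact ⟨_, ⟨u, hu, rfl⟩, ⟨u, hw, rfl⟩⟩
  have eT : ∀ e, Equiv.swap s(v2, v3) s(v1, v2) e ∈ T₂.edgeSet ↔ e ∈ T₁.edgeSet := by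
    intro e
    by_cases h1 : e = s(v2, v3)
    · subst h1
      rw [Equiv.swap_apply_left, mem_edgeSet, mem_edgeSet, a1, a2]; grind
    by_cases h2 : e = s(v1, v2)
    · subst h2
      rw [Equiv.swap_apply_right, mem_edgeSet, mem_edgeSet, a1, a2]; grind
    rw [Equiv.swap_apply_of_ne_of_ne h1 h2]
    induction e with
    | _ a b =>
      rw [mem_edgeSet, mem_edgeSet, a1, a2]
      rw [Sym2.eq_iff] at h1 h2
      grind
  have eG : ∀ G : SimpleGraph V, G.Adj v2 v3 → G.Adj v1 v2 →
      ∀ e, Equiv.swap s(v2, v3) s(v1, v2) e ∈ G.edgeSet \ T₂.edgeSet ↔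
        e ∈ G.edgeSet \ T₁.edgeSet := by
    intro G hG1 hG2 e
    rw [Set.mem_diff, Set.mem_diff, eT]
    refine and_congr_left fun _ => ?_
    by_cases h1 : e = s(v2, v3)
    · subst h1
      rw [Equiv.swap_apply_left, mem_edgeSet, mem_edgeSet]; tauto
    by_cases h2 : e = s(v1, v2)
    · subst h2
      rw [Equiv.swap_apply_right, mem_edgeSet, mem_edgeSet]; tauto
    rw [Equiv.swap_apply_of_ne_of_ne h1 h2]
  refine ⟨le_top, le_top, ?_, ?_, t1, t2, ?_, ?_⟩
  · intro a b; rw [a1, aH]; grind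
  · intro a b; rw [a2, aH]; grind
  · rw [aux_image ⊤ T₁ T₂ _ (eG ⊤ h23 h12) _ (fun e f he hf =>
      i2 e f (not_isDiag_of_mem_edgeSet _ he.1) he.2 (not_isDiag_of_mem_edgeSet _ hf.1) hf.2)]
    refine Set.ncard_lt_ncard (Set.ssubset_iff_exists.2 ⟨?_, ?_⟩) (Set.toFinite _)
    · rintro p ⟨e, f, rfl, hef, he, hf, hi⟩
      refine ⟨e, f, rfl, hef, he, hf, ?_⟩
      obtain ⟨u, hu, hw⟩ := (i1 e f (not_isDiag_of_mem_edgeSet _ he.1) he.2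
        (not_isDiag_of_mem_edgeSet _ hf.1) hf.2).1 hi
      exact ⟨u, .inl hu, .inl hw⟩
    · obtain ⟨b, hb⟩ : ∃ b, b ∉ ({v1, v2, v3} : Finset V) := by
        by_contra! h
        have := Finset.card_le_card (fun x _ => h x : Finset.univ ⊆ ({v1, v2, v3} : Finset V))
        have h3 : ({v1, v2, v3} : Finset V).card ≤ 3 := Finset.card_le_three
        rw [Finset.card_univ] at this
        omega
      obtain ⟨c, hc⟩ : ∃ c, c ∉ ({b, v1, v2, v3} : Finset V) := by
        by_contra! h
        have := Finset.card_le_card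
          (fun x _ => h x : Finset.univ ⊆ ({b, v1, v2, v3} : Finset V))
        have h3 : ({b, v1, v2, v3} : Finset V).card ≤ 4 := Finset.card_le_four
        rw [Finset.card_univ] at this
        omega
      simp only [Finset.mem_insert, Finset.mem_singleton, not_or] at hb hc
      refine ⟨s(s(v2, b), s(v3, c)), ⟨s(v2, b), s(v3, c), rfl, ?_, ?_, ?_, v3, ?_⟩, ?_⟩
      · rw [Ne, Sym2.eq_iff]; grind
      · rw [Set.mem_diff, mem_edgeSet, mem_edgeSet, a1, top_adj]; grind
      · rw [Set.mem_diff, mem_edgeSet, mem_edgeSet, a1, top_adj]; grind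
      · simp
      · rintro ⟨e, f, hp, hef, he, hf, hi⟩
        obtain ⟨u, hu, hw⟩ := (i1 e f (not_isDiag_of_mem_edgeSet _ he.1) he.2
          (not_isDiag_of_mem_edgeSet _ hf.1) hf.2).1 hi
        rcases Sym2.eq_iff.1 hp with ⟨rfl, rfl⟩ | ⟨rfl, rfl⟩ <;>
        · rw [Sym2.mem_iff] at hu hw
          grind
  · rw [aux_image H T₁ T₂ _ (eG H ((aH _ _).2 (by grind)) ((aH _ _).2 (by grind)))
      (cyclesIntersect T₁) ?_]
    · rfl
    · intro e f he hf
      have hv : ∀ e ∈ H.edgeSet \ T₁.edgeSet, v2 ∈ e → v3 ∈ e := by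
        intro e
        induction e with
        | _ a b =>
          rw [Set.mem_diff, mem_edgeSet, mem_edgeSet, a1, aH, Sym2.mem_iff, Sym2.mem_iff]
          grind
      have k1 := hv e he
      have k2 := hv f hf
      rw [i2 e f (not_isDiag_of_mem_edgeSet _ he.1) he.2
          (not_isDiag_of_mem_edgeSet _ hf.1) hf.2,
        i1 e f (not_isDiag_of_mem_edgeSet _ he.1) he.2
          (not_isDiag_of_mem_edgeSet _ hf.1) hf.2]
      refine exists_congr fun u => ?_
      grind
end

section
/- Let G be a finite connected simple graph that admits a star spanning tree T_s with center v, let T be a spanning tree of G with ∩_G(T) < ∩_G(T_s), and let Δ_T be the set of interbranch cycle-edges of T. Then ∩_{G-Δ_T}(T) < ∩_{G-Δ_T}(T_s), where G - Δ_T is the graph G with the edges of Δ_T removed. -/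
open SimpleGraph

/-- The set of interbranch cycle-edges of the spanning tree `T` (relative to the center
`v` of a star spanning tree): cycle-edges `e = (u, w)` such that the closest point of
`v` on the tree-cycle induced by `e` is neither `u` nor `w`. -/
def interbranchSet {V : Type*} (G T : SimpleGraph V) (v : V) : Set (Sym2 V) :=
  {e | e ∈ G.edgeSet \ T.edgeSet ∧
    ∀ w ∈ cycVerts T e, (∀ u ∈ cycVerts T e, T.dist v w ≤ T.dist v u) → w ∉ e}

namespace Aux17

variable {V : Type*}

/-- the complement of `pathEdges` as reachability after deletion of the edge -/
lemma not_mem_iff {T : SimpleGraph V} (hT : T.IsTree) (g : Sym2 V) (x y : V) :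
    g ∉ pathEdges T x y ↔ (T.deleteEdges {g}).Reachable x y := by
  classical
  constructor
  · intro h
    obtain ⟨p⟩ := hT.1.preconnected x y
    have hp : g ∉ p.toPath.1.edges := fun hg => h ⟨p.toPath.1, p.toPath.2, hg⟩
    exact ⟨p.toPath.1.toDeleteEdge g hp⟩
  · rintro ⟨q⟩ ⟨p, hp, hg⟩
    have h1 : (q.toPath.1.mapLe (T.deleteEdges_le {g})).IsPath :=
      q.toPath.2.mapLe _
    have h2 := hT.2.path_unique ⟨p, hp⟩ ⟨_, h1⟩
    have h3 : p = q.toPath.1.mapLe (T.deleteEdges_le {g}) := congrArg Subtype.val h2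
    rw [h3, Walk.edges_mapLe_eq_edges] at hg
    have := q.toPath.1.edges_subset_edgeSet hg
    simp at this

lemma symm_mem {T : SimpleGraph V} (hT : T.IsTree) {g : Sym2 V} {x y : V}
    (h : g ∈ pathEdges T x y) : g ∈ pathEdges T y x := by
  by_contra h'
  exact (not_mem_iff hT g x y).2 ((not_mem_iff hT g y x).1 h').symm h

lemma trans_not_mem {T : SimpleGraph V} (hT : T.IsTree) {g : Sym2 V} {x y z : V}
    (h : g ∉ pathEdges T x y) (h' : g ∉ pathEdges T y z) : g ∉ pathEdges T x z := by
  rw [not_mem_iff hT] at *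
  exact h.trans h'

lemma mem_edgeSet {T : SimpleGraph V} {g : Sym2 V} {x y : V}
    (h : g ∈ pathEdges T x y) : g ∈ T.edgeSet := by
  obtain ⟨p, _, hg⟩ := h
  exact p.edges_subset_edgeSet hg

lemma reach_or {T : SimpleGraph V} {a b z c : V} (q : T.Walk z c) (hc : c = a) :
    (T.deleteEdges {s(a, b)}).Reachable z a ∨ (T.deleteEdges {s(a, b)}).Reachable z b := by
  induction q with
  | nil => subst hc; exact Or.inl (Reachable.refl _)
  | @cons z z' c hadj q ih =>
    by_cases hg : s(z, z') = s(a, b)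
    · rw [Sym2.eq_iff] at hg
      rcases hg with ⟨rfl, rfl⟩ | ⟨rfl, rfl⟩
      · exact Or.inl (Reachable.refl _)
      · exact Or.inr (Reachable.refl _)
    · have : (T.deleteEdges {s(a, b)}).Adj z z' := by
        rw [deleteEdges_adj]; exact ⟨hadj, by simpa using hg⟩
      rcases ih hc with h | h
      · exact Or.inl (this.reachable.trans h)
      · exact Or.inr (this.reachable.trans h)

lemma two_class {T : SimpleGraph V} (hT : T.IsTree) {g : Sym2 V} {x y z : V}
    (h : g ∈ pathEdges T x y) (h' : g ∈ pathEdges T y z) : g ∉ pathEdges T x z := by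
  induction g using Sym2.ind with
  | _ a b =>
    have key : ∀ t, (T.deleteEdges {s(a, b)}).Reachable t a ∨
        (T.deleteEdges {s(a, b)}).Reachable t b := fun t => by
      obtain ⟨q⟩ := hT.1.preconnected t a
      exact reach_or q rfl
    have h1 : ¬ (T.deleteEdges {s(a, b)}).Reachable x y := fun k => (not_mem_iff hT _ _ _).2 k h
    have h2 : ¬ (T.deleteEdges {s(a, b)}).Reachable y z := fun k => (not_mem_iff hT _ _ _).2 k h'
    rw [not_mem_iff hT]
    rcases key x with kx | kx <;> rcases key y with ky | ky <;> rcases key z with kz | kz <;>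
    first
    | exact kx.trans kz.symm
    | exact absurd (kx.trans ky.symm) h1
    | exact absurd (ky.trans kz.symm) h2

lemma eq_of_adj {T : SimpleGraph V} (hT : T.IsTree) {g : Sym2 V} {x y : V}
    (h : g ∈ pathEdges T x y) (ha : T.Adj x y) : g = s(x, y) := by
  by_contra hne
  refine (not_mem_iff hT g x y).2 (Adj.reachable ?_) h
  rw [deleteEdges_adj]
  exact ⟨ha, fun hh => hne (by simpa using hh.symm)⟩

lemma self_not_mem {T : SimpleGraph V} (hT : T.IsTree) (g : Sym2 V) (x : V) :
    g ∉ pathEdges T x x := (not_mem_iff hT g x x).2 (Reachable.refl _)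

lemma exists_parent {T : SimpleGraph V} (hT : T.IsTree) {u v : V} (h : u ≠ v) :
    ∃ p, s(u, p) ∈ pathEdges T u v := by
  classical
  obtain ⟨q⟩ := hT.1.preconnected u v
  obtain ⟨q, hq⟩ := q.toPath
  cases q with
  | nil => exact absurd rfl h
  | @cons _ p _ hadj q => exact ⟨p, _, hq, by simp⟩

/-- an edge not on a path is not on a subpath -/
lemma not_mem_of_support {T : SimpleGraph V} {g : Sym2 V} {x y z : V} (hT : T.IsTree)
    (p : T.Walk x y) (hp : p.IsPath) (hz : z ∈ p.support) (hg : g ∉ pathEdges T x y) :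
    g ∉ pathEdges T x z := by
  classical
  rintro ⟨q, hq, hgq⟩
  have h2 := congrArg Subtype.val
    (hT.2.path_unique ⟨q, hq⟩ ⟨p.takeUntil z hz, hp.takeUntil hz⟩)
  simp only at h2
  rw [h2] at hgq
  exact hg ⟨p, hp, p.edges_takeUntil_subset hz hgq⟩

lemma dist_le {T : SimpleGraph V} (hT : T.IsTree) {u p v z : V}
    (h : s(u, p) ∈ pathEdges T v z) : T.dist v u ≤ T.dist v z := by
  classical
  obtain ⟨q, hq, hl⟩ := hT.1.exists_path_of_dist v z
  obtain ⟨r, hr, hg⟩ := h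
  have h2 := congrArg Subtype.val (hT.2.path_unique ⟨r, hr⟩ ⟨q, hq⟩)
  simp only at h2
  rw [h2] at hg
  have hu : u ∈ q.support := q.fst_mem_support_of_mem_edges hg
  calc T.dist v u ≤ (q.takeUntil u hu).length := SimpleGraph.dist_le _
    _ ≤ q.length := q.length_takeUntil_le hu
    _ = _ := hl

/-- the other endpoint of an interbranch edge is not a descendant -/
lemma interbranch_side {H T : SimpleGraph V} (hT : T.IsTree) {u w v p : V}
    (he : s(u, w) ∈ interbranchSet H T v) (hp : s(u, p) ∈ pathEdges T u v) :
    s(u, p) ∉ pathEdges T v w := by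
  classical
  intro hw
  have huw : s(u, p) ∉ pathEdges T u w := two_class hT hp hw
  obtain ⟨q0⟩ := hT.1.preconnected u w
  refine he.2 u ⟨u, w, rfl, q0.toPath.1, q0.toPath.2, Walk.start_mem_support _⟩ ?_ (by simp)
  rintro z ⟨x, y, hxy, q, hq, hz⟩
  apply dist_le hT (p := p)
  by_contra hvz
  rw [Sym2.eq_iff] at hxy
  rcases hxy with ⟨rfl, rfl⟩ | ⟨rfl, rfl⟩
  · have h1 := not_mem_of_support hT q hq hz huw
    exact trans_not_mem hT h1 (fun h => hvz (symm_mem hT h)) hp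
  · have h1 := not_mem_of_support hT q hq hz (fun h => huw (symm_mem hT h))
    exact trans_not_mem hT hvz (fun h => h1 (symm_mem hT h)) hw

lemma intersect_of {T : SimpleGraph V} {g : Sym2 V} {a b c d : V}
    (h : g ∈ pathEdges T a b) (h' : g ∈ pathEdges T c d) :
    cyclesIntersect T s(a, b) s(c, d) :=
  ⟨g, ⟨Or.inr ⟨a, b, rfl, h⟩, Or.inr ⟨c, d, rfl, h'⟩⟩, mem_edgeSet h⟩

lemma intersect_comm {T : SimpleGraph V} {e f : Sym2 V} (h : cyclesIntersect T e f) :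
    cyclesIntersect T f e := by
  obtain ⟨g, ⟨h1, h2⟩, h3⟩ := h
  exact ⟨g, ⟨h2, h1⟩, h3⟩

lemma star_mem {H Ts : SimpleGraph V} {v : V} (hTs : IsStarSpanningTree H Ts v)
    {x y : V} {g : Sym2 V} (h : g ∈ pathEdges Ts x y) : g = s(v, x) ∨ g = s(v, y) := by
  obtain ⟨-, ht, hs⟩ := hTs
  by_cases h1 : g ∈ pathEdges Ts v x
  · by_cases hx : x = v
    · subst hx; exact absurd h1 (self_not_mem ht _ _)
    · exact Or.inl (eq_of_adj ht h1 (hs x hx))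
  · by_cases h2 : g ∈ pathEdges Ts v y
    · by_cases hx : y = v
      · subst hx; exact absurd h2 (self_not_mem ht _ _)
      · exact Or.inr (eq_of_adj ht h2 (hs y hx))
    · exact absurd h (trans_not_mem ht (fun h => h1 (symm_mem ht h)) h2)

lemma star_not_mem {H Ts : SimpleGraph V} {v : V} (hTs : IsStarSpanningTree H Ts v)
    {e : Sym2 V} (he : e ∈ H.edgeSet \ Ts.edgeSet) : v ∉ e := by
  intro hv
  obtain ⟨y, rfl⟩ := hv
  have : H.Adj v y := he.1
  exact he.2 (hTs.2.2 y this.ne')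

lemma star_cyc {H Ts : SimpleGraph V} {v : V} (hTs : IsStarSpanningTree H Ts v)
    {e g : Sym2 V} (he : e ∈ H.edgeSet \ Ts.edgeSet) (hg : g ∈ Ts.edgeSet)
    (h : g ∈ cycEdges Ts e) : ∃ a ∈ e, g = s(v, a) := by
  rcases h with rfl | ⟨x, y, rfl, h⟩
  · exact absurd hg he.2
  · rcases star_mem hTs h with h | h
    · exact ⟨x, by simp, h⟩
    · exact ⟨y, by simp, h⟩

lemma star_intersect {H Ts : SimpleGraph V} {v : V} (hTs : IsStarSpanningTree H Ts v)
    {e f : Sym2 V} (he : e ∈ H.edgeSet \ Ts.edgeSet) (hf : f ∈ H.edgeSet \ Ts.edgeSet)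
    (h : cyclesIntersect Ts e f) : ∃ a, a ∈ e ∧ a ∈ f := by
  obtain ⟨g, ⟨h1, h2⟩, h3⟩ := h
  obtain ⟨a, ha, rfl⟩ := star_cyc hTs he h3 h1
  obtain ⟨b, hb, hab⟩ := star_cyc hTs hf h3 h2
  have : a = b := Sym2.congr_right.1 hab
  subst this
  exact ⟨a, ha, hb⟩

/-- image of an edge `s(u, x)` in the injection -/
lemma image_side {H Ts T : SimpleGraph V} {v u w p x : V} (hTs : IsStarSpanningTree H Ts v)
    (hT : T.IsTree) (huv : u ≠ v)
    (hp : s(u, p) ∈ pathEdges T u v) (hw : s(u, p) ∉ pathEdges T v w)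
    (hx : H.Adj u x) (hxv : x ≠ v) :
    (s(u, x) ∉ T.edgeSet ∧ cyclesIntersect T s(u, w) s(u, x)) ∨
    ∃ y, s(v, y) ∈ H.edgeSet ∧ s(v, y) ∉ T.edgeSet ∧ cyclesIntersect T s(u, w) s(v, y) ∧
      s(u, p) ∈ pathEdges T v y ∧ ((y = x ∧ x ≠ u) ∨ (y = u ∧ x = p)) := by
  have huw : s(u, p) ∈ pathEdges T u w := by
    by_contra h
    exact trans_not_mem hT h (fun h => hw (symm_mem hT h)) hp
  by_cases hD : s(u, p) ∈ pathEdges T v x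
  · refine Or.inr ⟨x, hTs.1 (hTs.2.2 x hxv), fun ha => ?_, intersect_of huw hD, hD,
      Or.inl ⟨rfl, hx.ne'⟩⟩
    have := eq_of_adj hT hD ha
    rw [Sym2.eq_iff] at this
    rcases this with ⟨h, -⟩ | ⟨h, -⟩
    · exact huv h
    · exact hx.ne h
  · have hux : s(u, p) ∈ pathEdges T u x := by
      by_contra h
      exact trans_not_mem hT h (fun h => hD (symm_mem hT h)) hp
    by_cases hf : s(u, x) ∈ T.edgeSet
    · have := eq_of_adj hT hux hf
      have hpx : p = x := Sym2.congr_right.1 this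
      subst hpx
      refine Or.inr ⟨u, hTs.1 (hTs.2.2 u huv), fun ha => ?_, intersect_of huw (symm_mem hT hp),
        symm_mem hT hp, Or.inr ⟨rfl, rfl⟩⟩
      have := eq_of_adj hT (symm_mem hT hp) ha
      rw [Sym2.eq_iff] at this
      rcases this with ⟨h, -⟩ | ⟨-, h⟩
      · exact huv h
      · exact hxv h
    · exact Or.inl ⟨hf, intersect_of huw hux⟩

lemma disjoint_side {T : SimpleGraph V} {v u w p p' x : V} (hT : T.IsTree)
    (hp : s(u, p) ∈ pathEdges T u v) (hw : s(u, p) ∉ pathEdges T v w)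
    (hu : s(w, p') ∉ pathEdges T v u)
    (hx : s(u, p) ∈ pathEdges T v x) (hx' : s(w, p') ∈ pathEdges T v x) : False := by
  have h1 : s(w, p') ∈ pathEdges T u x := by
    by_contra h
    exact trans_not_mem hT hu h hx'
  have h2 : s(u, p) ∉ pathEdges T u x := two_class hT hp hx
  obtain ⟨q, hq, hg⟩ := h1
  have hws : w ∈ q.support := q.fst_mem_support_of_mem_edges hg
  have h3 := not_mem_of_support hT q hq hws h2
  exact trans_not_mem hT h3 (fun h => hw (symm_mem hT h)) hp

lemma cycle_le [Finite V] {H Ts T : SimpleGraph V} {v : V} (hTs : IsStarSpanningTree H Ts v)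
    (hT : T.IsTree) {e : Sym2 V} (he : e ∈ interbranchSet H T v)
    (heT : e ∈ H.edgeSet \ Ts.edgeSet) :
    cycleInterNum H Ts e ≤ cycleInterNum H T e := by
  classical
  have hve := star_not_mem hTs heT
  induction e using Sym2.ind with
  | _ u w =>
  have huv : u ≠ v := by rintro rfl; simp at hve
  have hwv : w ≠ v := by rintro rfl; simp at hve
  have he' : s(w, u) ∈ interbranchSet H T v := by rwa [Sym2.eq_swap]
  obtain ⟨p, hp⟩ := exists_parent hT huv
  obtain ⟨p', hp'⟩ := exists_parent hT hwv
  have hw := interbranch_side hT he hp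
  have hu := interbranch_side hT he' hp'
  let R : Sym2 V → Sym2 V → Prop := fun f f' => f' = f ∨ ∃ y, f' = s(v, y) ∧
    ((s(u, p) ∈ pathEdges T v y ∧ ((f = s(u, y) ∧ y ≠ u) ∨ (y = u ∧ f = s(u, p)))) ∨
     (s(w, p') ∈ pathEdges T v y ∧ ((f = s(w, y) ∧ y ≠ w) ∨ (y = w ∧ f = s(w, p')))))
  have ex : ∀ f ∈ {f | f ∈ H.edgeSet \ Ts.edgeSet ∧ f ≠ s(u, w) ∧ cyclesIntersect Ts s(u, w) f},
      ∃ f', f' ∈ {f | f ∈ H.edgeSet \ T.edgeSet ∧ f ≠ s(u, w) ∧ cyclesIntersect T s(u, w) f} ∧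
        R f f' := by
    rintro f ⟨hf, hne, hI⟩
    have hvf := star_not_mem hTs hf
    obtain ⟨a, ha, x, rfl⟩ := star_intersect hTs heT hf hI
    have hxv : x ≠ v := by rintro rfl; simp at hvf
    have hne' : ∀ y, s(v, y) ≠ s(u, w) := fun y h => hve (h ▸ by simp)
    rw [Sym2.mem_iff] at ha
    rcases ha with rfl | rfl
    · rcases image_side hTs hT huv hp hw hf.1 hxv with ⟨h1, h2⟩ | ⟨y, h1, h2, h3, h4, h5⟩
      · exact ⟨_, ⟨⟨hf.1, h1⟩, hne, h2⟩, Or.inl rfl⟩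
      · refine ⟨_, ⟨⟨h1, h2⟩, hne' y, h3⟩, Or.inr ⟨y, rfl, Or.inl ⟨h4, ?_⟩⟩⟩
        rcases h5 with ⟨rfl, h⟩ | ⟨rfl, rfl⟩
        · exact Or.inl ⟨rfl, h⟩
        · exact Or.inr ⟨rfl, rfl⟩
    · rcases image_side hTs hT hwv hp' hu hf.1 hxv with ⟨h1, h2⟩ | ⟨y, h1, h2, h3, h4, h5⟩
      · exact ⟨_, ⟨⟨hf.1, h1⟩, hne, by rwa [Sym2.eq_swap (a := u)]⟩, Or.inl rfl⟩
      · refine ⟨_, ⟨⟨h1, h2⟩, hne' y, by rwa [Sym2.eq_swap (a := u)]⟩,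
          Or.inr ⟨y, rfl, Or.inr ⟨h4, ?_⟩⟩⟩
        rcases h5 with ⟨rfl, h⟩ | ⟨rfl, rfl⟩
        · exact Or.inl ⟨rfl, h⟩
        · exact Or.inr ⟨rfl, rfl⟩
  have inj : ∀ f h k, v ∉ f → v ∉ h → R f k → R h k → f = h := by
    intro f h k hf hh h1 h2
    rcases h1 with rfl | ⟨y, rfl, h1⟩
    · rcases h2 with h2 | ⟨y, rfl, h2⟩
      · exact h2
      · simp at hf
    · rcases h2 with rfl | ⟨y', hy, h2⟩
      · simp at hh
      · have : y = y' := Sym2.congr_right.1 hy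
        subst this
        rcases h1 with ⟨a1, h1⟩ | ⟨a1, h1⟩ <;> rcases h2 with ⟨a2, h2⟩ | ⟨a2, h2⟩
        · rcases h1 with ⟨b1, c1⟩ | ⟨b1, c1⟩ <;> rcases h2 with ⟨b2, c2⟩ | ⟨b2, c2⟩ <;>
            first | exact absurd b2 c1 | exact absurd b1 c2 | rw [b1, b2] | rw [c1, c2]
        · exact (disjoint_side hT hp hw hu a1 a2).elim
        · exact (disjoint_side hT hp hw hu a2 a1).elim
        · rcases h1 with ⟨b1, c1⟩ | ⟨b1, c1⟩ <;> rcases h2 with ⟨b2, c2⟩ | ⟨b2, c2⟩ <;>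
            first | exact absurd b2 c1 | exact absurd b1 c2 | rw [b1, b2] | rw [c1, c2]
  choose! φ hφ using ex
  refine Set.ncard_le_ncard_of_injOn φ (fun f hf => (hφ f hf).1) ?_ (Set.toFinite _)
  intro f hf h hh hfh
  refine inj f h (φ f) (star_not_mem hTs hf.1) (star_not_mem hTs hh.1) (hφ f hf).2 ?_
  rw [hfh]; exact (hφ h hh).2

lemma split [Finite V] (H T : SimpleGraph V) {e : Sym2 V} (he : e ∈ H.edgeSet \ T.edgeSet) :
    treeInterNum H T = treeInterNum (H.deleteEdges {e}) T + cycleInterNum H T e := by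
  classical
  unfold treeInterNum cycleInterNum
  set C := {f | f ∈ H.edgeSet \ T.edgeSet ∧ f ≠ e ∧ cyclesIntersect T e f}
  have hinj : Function.Injective (fun f : Sym2 V => s(e, f)) := fun a b h => Sym2.congr_right.1 h
  rw [← Set.ncard_image_of_injective C hinj, ← Set.ncard_union_eq]
  · congr 1
    ext q
    constructor
    · rintro ⟨a, b, rfl, hab, ha, hb, hI⟩
      by_cases h1 : a = e
      · subst h1
        exact Or.inr ⟨b, ⟨hb, hab.symm, hI⟩, rfl⟩
      · by_cases h2 : b = e
        · subst h2
          exact Or.inr ⟨a, ⟨ha, hab, intersect_comm hI⟩, Sym2.eq_swap⟩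
        · refine Or.inl ⟨a, b, rfl, hab, ⟨?_, ha.2⟩, ⟨?_, hb.2⟩, hI⟩
          · rw [edgeSet_deleteEdges]; exact ⟨ha.1, h1⟩
          · rw [edgeSet_deleteEdges]; exact ⟨hb.1, h2⟩
    · rintro (⟨a, b, rfl, hab, ha, hb, hI⟩ | ⟨b, ⟨hb, hne, hI⟩, rfl⟩)
      · rw [edgeSet_deleteEdges] at ha hb
        exact ⟨a, b, rfl, hab, ⟨ha.1.1, ha.2⟩, ⟨hb.1.1, hb.2⟩, hI⟩
      · exact ⟨e, b, rfl, hne.symm, he, hb, hI⟩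
  · rw [Set.disjoint_left]
    rintro q ⟨a, b, rfl, hab, ha, hb, hI⟩ ⟨f, hf, hq⟩
    rw [edgeSet_deleteEdges] at ha hb
    have : e ∈ s(a, b) := by rw [← hq]; simp
    rw [Sym2.mem_iff] at this
    rcases this with rfl | rfl
    · exact ha.1.2 rfl
    · exact hb.1.2 rfl

/-- an interbranch edge avoids the root -/
lemma root_not_mem {H T : SimpleGraph V} {v : V} (hT : T.IsTree) {e : Sym2 V}
    (he : e ∈ interbranchSet H T v) : v ∉ e := by
  classical
  rintro ⟨y, rfl⟩
  obtain ⟨q⟩ := hT.1.preconnected v y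
  exact he.2 v ⟨v, y, rfl, q.toPath.1, q.toPath.2, Walk.start_mem_support _⟩
    (fun u _ => by simp) (by simp)

lemma star_edge {H Ts : SimpleGraph V} {v : V} (hTs : IsStarSpanningTree H Ts v)
    {e : Sym2 V} (he : e ∈ Ts.edgeSet) : v ∈ e := by
  induction e using Sym2.ind with
  | _ a b =>
    have hab : Ts.Adj a b := he
    have : s(a, b) ∈ pathEdges Ts a b :=
      ⟨Walk.cons hab Walk.nil, by simpa using hab.ne, by simp⟩
    rcases star_mem hTs this with h | h <;> rw [h] <;> simp

lemma main_step [Finite V] {G Ts T : SimpleGraph V} {v : V} (hTs : IsStarSpanningTree G Ts v)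
    (hT : T.IsTree) (D : Set (Sym2 V)) (hD : D ⊆ interbranchSet G T v) :
    treeInterNum G Ts + treeInterNum (G.deleteEdges D) T ≤
      treeInterNum G T + treeInterNum (G.deleteEdges D) Ts := by
  classical
  induction D, Set.toFinite D using Set.Finite.induction_on with
  | empty => simp [add_comm]
  | @insert e D heD _ ih =>
    have ih := ih ((Set.subset_insert _ _).trans hD)
    have heI : e ∈ interbranchSet G T v := hD (Set.mem_insert _ _)
    have hrw : G.deleteEdges (insert e D) = (G.deleteEdges D).deleteEdges {e} := by
      rw [deleteEdges_deleteEdges, Set.union_singleton]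
    rw [hrw]
    set H := G.deleteEdges D with hH
    have heH : e ∈ H.edgeSet := by
      rw [hH, edgeSet_deleteEdges]; exact ⟨heI.1.1, heD⟩
    have heIH : e ∈ interbranchSet H T v := ⟨⟨heH, heI.1.2⟩, heI.2⟩
    have heTs : e ∈ H.edgeSet \ Ts.edgeSet :=
      ⟨heH, fun h => root_not_mem hT heI (star_edge hTs h)⟩
    have hTsH : IsStarSpanningTree H Ts v := by
      refine ⟨?_, hTs.2⟩
      rw [← edgeSet_subset_edgeSet, hH, edgeSet_deleteEdges]
      intro f hf
      refine ⟨edgeSet_subset_edgeSet.2 hTs.1 hf, fun hfD => ?_⟩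
      exact root_not_mem hT (hD (Set.mem_insert_of_mem _ hfD)) (star_edge hTs hf)
    have h1 := split H T heIH.1
    have h2 := split H Ts heTs
    have h3 := cycle_le hTsH hT heIH heTs
    omega

end Aux17

/-- If a connected graph `G` admits a star spanning tree `T_s` with center
`v`, and `T` is a spanning tree with `∩_G(T) < ∩_G(T_s)`, then removing the set `Δ_T` of
interbranch cycle-edges of `T` preserves the inequality:
`∩_{G-Δ_T}(T) < ∩_{G-Δ_T}(T_s)`. -/
theorem stmt_17 {V : Type*} [Fintype V] (G Ts T : SimpleGraph V)
    (hG : G.Connected) (v : V) (hTs : IsStarSpanningTree G Ts v)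
    (hle : T ≤ G) (hT : T.IsTree)
    (hlt : treeInterNum G T < treeInterNum G Ts) :
    treeInterNum (G.deleteEdges (interbranchSet G T v)) T
      < treeInterNum (G.deleteEdges (interbranchSet G T v)) Ts := by
  have := Aux17.main_step hTs hT _ (Set.Subset.refl (interbranchSet G T v))
  omega
end

section
/- Let G be a finite connected simple graph that admits a star spanning tree T_s with center v, and let T be a spanning tree of G with no interbranch cycle-edges (Δ_T = ∅). Then ∩_G(T) = Σ_{w ∈ N(v)} ∩_{G_w}(T_w), where for each neighbor w of v in T (rooted at v), T_w is the principal subtree with respect to w and G_w is the subgraph of G spanned by the vertices of T_w. -/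
open SimpleGraph

/-- Vertex set of the principal subtree of the rooted tree `(T, v)` with respect to the
neighbor `w` of `v`: the vertex `v` together with all vertices `u` such that `w` lies on
the (unique) path in `T` from `v` to `u`. -/
def branchVerts {V : Type*} (T : SimpleGraph V) (v w : V) : Set V :=
  insert v {u | ∃ p : T.Walk v u, p.IsPath ∧ w ∈ p.support}

/-- The subgraph of `G` spanned by the vertex set `s` (on the same ambient vertex type):
all edges of `G` with both endpoints in `s`. -/
def spannedSubgraph {V : Type*} (G : SimpleGraph V) (s : Set V) : SimpleGraph V :=
  SimpleGraph.fromEdgeSet {f | f ∈ G.edgeSet ∧ ∀ x ∈ f, x ∈ s}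

section Helpers

variable {V : Type*} {T : SimpleGraph V}

theorem aux_unique (hT : T.IsTree) {x y : V} {p q : T.Walk x y} (hp : p.IsPath) (hq : q.IsPath) :
    p = q :=
  (hT.existsUnique_path x y).unique hp hq

/-- Every vertex on the path from `v` to a vertex of the branch is in the branch. -/
theorem aux_path_branch (hT : T.IsTree) {v w u z : V} (hvw : T.Adj v w)
    (hu : u ∈ branchVerts T v w) (p : T.Walk v u) (hp : p.IsPath) (hz : z ∈ p.support) :
    z ∈ branchVerts T v w := by
  classical
  rcases hu with rfl | ⟨p', hp', hw⟩
  · have : p = Walk.nil := aux_unique hT hp Walk.IsPath.nil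
    subst this
    simp at hz
    exact Or.inl hz
  · obtain rfl := aux_unique hT hp hp'
    by_cases hwz : w ∈ (p.takeUntil z hz).support
    · exact Or.inr ⟨_, hp.takeUntil hz, hwz⟩
    · have h1 : w ∈ (p.dropUntil z hz).support := by
        have := p.take_spec hz
        rw [← this, Walk.mem_support_append_iff] at hw
        exact hw.resolve_left hwz
      have h2 : ((p.takeUntil z hz).append ((p.dropUntil z hz).takeUntil w h1)).IsPath := by
        have h3 : ((p.takeUntil z hz).append (((p.dropUntil z hz).takeUntil w h1).append
            ((p.dropUntil z hz).dropUntil w h1))).IsPath := by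
          rw [Walk.take_spec, Walk.take_spec]; exact hp
        rw [Walk.append_assoc] at h3
        exact h3.of_append_left
      have h4 : (Walk.cons hvw Walk.nil).IsPath := by
        simp [hvw.ne]
      have h5 := aux_unique hT h2 h4
      have h6 : z ∈ (Walk.cons hvw Walk.nil : T.Walk v w).support := by
        rw [← h5, Walk.mem_support_append_iff]
        exact Or.inl (Walk.end_mem_support _)
      simp at h6
      rcases h6 with rfl | rfl
      · exact Or.inl rfl
      · exact Or.inr ⟨_, h4, by simp⟩

/-- Branches are closed under paths. -/
theorem aux_convex (hT : T.IsTree) {v w x y z : V} (hvw : T.Adj v w)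
    (hx : x ∈ branchVerts T v w) (hy : y ∈ branchVerts T v w) (p : T.Walk x y) (hp : p.IsPath)
    (hz : z ∈ p.support) : z ∈ branchVerts T v w := by
  classical
  obtain ⟨a, ha⟩ := hT.connected.exists_isPath v x
  obtain ⟨b, hb⟩ := hT.connected.exists_isPath v y
  obtain rfl := aux_unique hT hp (Walk.bypass_isPath (a.reverse.append b))
  have := Walk.support_bypass_subset_support _ hz
  rw [Walk.mem_support_append_iff, Walk.support_reverse, List.mem_reverse] at this
  rcases this with h | h
  · exact aux_path_branch hT hvw hx a ha h
  · exact aux_path_branch hT hvw hy b hb h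

theorem aux_disj (hT : T.IsTree) {v w w' u : V} (hw : T.Adj v w) (hw' : T.Adj v w')
    (h : u ∈ branchVerts T v w) (h' : u ∈ branchVerts T v w') (huv : u ≠ v) : w = w' := by
  obtain ⟨p, hp, h1⟩ := h.resolve_left huv
  obtain ⟨q, hq, h2⟩ := h'.resolve_left huv
  obtain rfl := aux_unique hT hp hq
  rw [hT.isAcyclic.eq_snd_of_adj_start hp hw h1, hT.isAcyclic.eq_snd_of_adj_start hp hw' h2]

theorem aux_exists (hT : T.IsTree) {v u : V} (huv : u ≠ v) :
    ∃ w, T.Adj v w ∧ u ∈ branchVerts T v w := by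
  obtain ⟨p, hp⟩ := hT.connected.exists_isPath v u
  cases p with
  | nil => exact absurd rfl huv
  | cons h q => exact ⟨_, h, Or.inr ⟨_, hp, by simp⟩⟩

theorem aux_step (hT : T.IsTree) {v w a b : V} (hvw : T.Adj v w)
    (ha : a ∈ branchVerts T v w) (hav : a ≠ v) (hab : T.Adj a b) : b ∈ branchVerts T v w := by
  obtain ⟨p, hp, h1⟩ := ha.resolve_left hav
  by_cases hb : b ∈ p.support
  · exact aux_path_branch hT hvw ha p hp hb
  · exact Or.inr ⟨_, hp.concat hb hab, by simp [Walk.support_concat, h1]⟩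

theorem aux_walk (hT : T.IsTree) {v w : V} (hvw : T.Adj v w) {a b : V} (p : T.Walk a b)
    (ha : a ∈ branchVerts T v w) (hv : v ∉ p.support) : b ∈ branchVerts T v w := by
  induction p with
  | nil => exact ha
  | cons h q ih =>
    simp only [Walk.support_cons, List.mem_cons, not_or] at hv
    exact ih (aux_step hT hvw ha (Ne.symm hv.1) h) hv.2

theorem aux_edge' (hT : T.IsTree) {v x y : V} (hxy : x ≠ y) (p : T.Walk x y)
    (hmin : v ∈ p.support → x = v ∨ y = v) :
    ∃ w, T.Adj v w ∧ x ∈ branchVerts T v w ∧ y ∈ branchVerts T v w := by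
  by_cases hx : x = v
  · obtain ⟨w, h1, h2⟩ := aux_exists hT (v := v) (u := y) (fun h => hxy (hx.trans h.symm))
    exact ⟨w, h1, Or.inl hx, h2⟩
  by_cases hy : y = v
  · obtain ⟨w, h1, h2⟩ := aux_exists hT (v := v) (u := x) hx
    exact ⟨w, h1, h2, Or.inl hy⟩
  obtain ⟨w, h1, h2⟩ := aux_exists hT (v := v) (u := x) hx
  exact ⟨w, h1, h2, aux_walk hT h1 p h2 (fun h => (hmin h).elim hx hy)⟩

/-- Every cycle-edge lies in a branch. -/
theorem aux_edge {G : SimpleGraph V} (hT : T.IsTree) {v : V} (hib : interbranchSet G T v = ∅)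
    {e : Sym2 V} (he : e ∈ G.edgeSet \ T.edgeSet) :
    ∃ w, T.Adj v w ∧ ∀ x ∈ e, x ∈ branchVerts T v w := by
  have hn : e ∉ interbranchSet G T v := by simp [hib]
  simp only [interbranchSet, Set.mem_setOf_eq, not_and, not_forall, not_not] at hn
  obtain ⟨z, hz, hmin, hze⟩ := hn he
  obtain ⟨x, y, rfl, p, hp, -⟩ := hz
  obtain ⟨w, h1, h2, h3⟩ := aux_edge' hT (v := v) (G.ne_of_adj he.1) p (by
    intro hv
    have h0 := hmin v ⟨x, y, rfl, p, hp, hv⟩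
    rw [dist_self, Nat.le_zero, hT.connected.dist_eq_zero_iff] at h0
    subst h0
    rcases Sym2.mem_iff.1 hze with h | h
    · exact Or.inl h.symm
    · exact Or.inr h.symm)
  refine ⟨w, h1, ?_⟩
  intro u hu
  rcases Sym2.mem_iff.1 hu with rfl | rfl
  · exact h2
  · exact h3

theorem aux_mem_spanned {G : SimpleGraph V} {s : Set V} {e : Sym2 V} :
    e ∈ (spannedSubgraph G s).edgeSet ↔ e ∈ G.edgeSet ∧ ∀ x ∈ e, x ∈ s := by
  simp only [spannedSubgraph, edgeSet_fromEdgeSet, Set.mem_diff, Set.mem_setOf_eq]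
  exact ⟨fun h => h.1, fun h => ⟨h, fun hd => G.not_isDiag_of_mem_edgeSet h.1 hd⟩⟩

theorem aux_spanned_le {s : Set V} : spannedSubgraph T s ≤ T := by
  rw [← edgeSet_subset_edgeSet]
  exact fun e he => (aux_mem_spanned.1 he).1

theorem aux_cyc_branch (hT : T.IsTree) {v w : V} (hvw : T.Adj v w) {e g : Sym2 V}
    (he : ∀ x ∈ e, x ∈ branchVerts T v w) (hg : g ∈ cycEdges T e) :
    ∀ x ∈ g, x ∈ branchVerts T v w := by
  rcases hg with rfl | ⟨x, y, rfl, p, hp, hgp⟩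
  · exact he
  · intro u hu
    exact aux_convex hT hvw (he x (by simp)) (he y (by simp)) p hp
      (Walk.mem_support_of_mem_edges hgp hu)

theorem aux_cyc_eq (hT : T.IsTree) {v w : V} (hvw : T.Adj v w) {e : Sym2 V}
    (he : ∀ x ∈ e, x ∈ branchVerts T v w) :
    cycEdges (spannedSubgraph T (branchVerts T v w)) e = cycEdges T e := by
  ext g
  constructor
  · rintro (rfl | ⟨x, y, rfl, p, hp, hgp⟩)
    · exact Or.inl rfl
    · exact Or.inr ⟨x, y, rfl, p.mapLe aux_spanned_le, hp.mapLe _, by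
        rwa [Walk.edges_mapLe_eq_edges]⟩
  · rintro (rfl | ⟨x, y, rfl, p, hp, hgp⟩)
    · exact Or.inl rfl
    · have h : ∀ f ∈ p.edges, f ∈ (spannedSubgraph T (branchVerts T v w)).edgeSet := fun f hf =>
        aux_mem_spanned.2 ⟨p.edges_subset_edgeSet hf,
          aux_cyc_branch hT hvw he (Or.inr ⟨x, y, rfl, p, hp, hf⟩)⟩
      exact Or.inr ⟨x, y, rfl, p.transfer _ h, hp.transfer h, by rwa [Walk.edges_transfer]⟩

theorem aux_inter_iff (hT : T.IsTree) {v w : V} (hvw : T.Adj v w) {e f : Sym2 V}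
    (he : ∀ x ∈ e, x ∈ branchVerts T v w) (hf : ∀ x ∈ f, x ∈ branchVerts T v w) :
    cyclesIntersect (spannedSubgraph T (branchVerts T v w)) e f ↔ cyclesIntersect T e f := by
  unfold cyclesIntersect
  rw [aux_cyc_eq hT hvw he, aux_cyc_eq hT hvw hf]
  constructor
  · rintro ⟨g, hg, hgT⟩
    exact ⟨g, hg, (aux_mem_spanned.1 hgT).1⟩
  · rintro ⟨g, hg, hgT⟩
    exact ⟨g, hg, aux_mem_spanned.2 ⟨hgT, aux_cyc_branch hT hvw he hg.1⟩⟩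

/-- An edge lies in at most one branch. -/
theorem aux_edge_unique {G : SimpleGraph V} (hT : T.IsTree) {v w w' : V} (hw : T.Adj v w)
    (hw' : T.Adj v w') {e : Sym2 V} (heG : e ∈ G.edgeSet) (he : ∀ x ∈ e, x ∈ branchVerts T v w)
    (he' : ∀ x ∈ e, x ∈ branchVerts T v w') : w = w' := by
  induction e with
  | h x y =>
    have hxy : x ≠ y := G.ne_of_adj heG
    by_cases hx : x = v
    · exact aux_disj hT hw hw' (he y (by simp)) (he' y (by simp)) (fun h => hxy (hx.trans h.symm))
    · exact aux_disj hT hw hw' (he x (by simp)) (he' x (by simp)) hx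

end Helpers

/-- If a connected graph `G` admits a star spanning tree `T_s` with center
`v`, and `T` is a spanning tree with no interbranch cycle-edges (`Δ_T = ∅`), then
`∩_G(T) = Σ_{w ∈ N_T(v)} ∩_{G_w}(T_w)`, where `T_w` is the principal subtree of `T`
(rooted at `v`) with respect to `w` and `G_w` is the subgraph of `G` spanned by the
vertices of `T_w`. -/
theorem stmt_18 {V : Type*} [Fintype V] [DecidableEq V] (G Ts T : SimpleGraph V)
    [DecidableRel T.Adj]
    (hG : G.Connected) (v : V) (hTs : IsStarSpanningTree G Ts v)
    (hle : T ≤ G) (hT : T.IsTree)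
    (hib : interbranchSet G T v = ∅) :
    treeInterNum G T = ∑ w ∈ T.neighborFinset v,
      treeInterNum (spannedSubgraph G (branchVerts T v w))
        (spannedSubgraph T (branchVerts T v w)) := by
  classical
  unfold treeInterNum
  rw [← finsum_mem_coe_finset, ← Set.Finite.ncard_biUnion (Finset.finite_toSet _)
    (fun _ _ => Set.toFinite _)]
  · congr 1
    ext p
    simp only [Set.mem_iUnion, Set.mem_setOf_eq, Finset.mem_coe, mem_neighborFinset, exists_prop]
    constructor
    · rintro ⟨e, f, rfl, hne, he, hf, hi⟩
      obtain ⟨w, hw, hew⟩ := aux_edge hT hib he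
      obtain ⟨w', hw', hfw⟩ := aux_edge hT hib hf
      have hww : w = w' := by
        obtain ⟨g, ⟨hge, hgf⟩, hgT⟩ := hi
        exact aux_edge_unique hT hw hw' hgT (aux_cyc_branch hT hw hew hge)
          (aux_cyc_branch hT hw' hfw hgf)
      subst hww
      exact ⟨w, hw, e, f, rfl, hne,
        ⟨aux_mem_spanned.2 ⟨he.1, hew⟩, fun h => he.2 (aux_mem_spanned.1 h).1⟩,
        ⟨aux_mem_spanned.2 ⟨hf.1, hfw⟩, fun h => hf.2 (aux_mem_spanned.1 h).1⟩,
        (aux_inter_iff hT hw hew hfw).2 hi⟩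
    · rintro ⟨w, hw, e, f, rfl, hne, ⟨he, he'⟩, ⟨hf, hf'⟩, hi⟩
      rw [aux_mem_spanned] at he hf
      exact ⟨e, f, rfl, hne, ⟨he.1, fun h => he' (aux_mem_spanned.2 ⟨h, he.2⟩)⟩,
        ⟨hf.1, fun h => hf' (aux_mem_spanned.2 ⟨h, hf.2⟩)⟩, (aux_inter_iff hT hw he.2 hf.2).1 hi⟩
  · intro w hw w' hw' hne
    simp only [Finset.mem_coe, mem_neighborFinset] at hw hw'
    refine Set.disjoint_left.2 ?_
    rintro p ⟨e, f, rfl, -, he, hf, -⟩ ⟨e', f', hp, -, he', hf', -⟩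
    have h1 := aux_mem_spanned.1 he.1
    have h2 : ∀ x ∈ e, x ∈ branchVerts T v w' := by
      rcases Sym2.eq_iff.1 hp with ⟨rfl, rfl⟩ | ⟨rfl, rfl⟩
      · exact (aux_mem_spanned.1 he'.1).2
      · exact (aux_mem_spanned.1 hf'.1).2
    exact hne (aux_edge_unique hT hw hw' h1.1 h1.2 h2)
end
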